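/- arXiv:1501.07505 — 2 statements merged into one kernel-verified Lean document; each statement's English description precedes it below -/
import Mathlib

section
/- There exists a constant C > 0 such that for every 3×3 real matrix F with det F > 0 one has dist²(F, SO(3)) ≤ C · Σ_{i=1}^{6} (|F wᵢ| − 1)², where dist(F, SO(3)) is the Euclidean (Frobenius) distance from F to the set of rotation matrices SO(3). -/
/- STATEMENT 0: Discrete rigidity estimate for the regular tetrahedron
(Lemma `lemma:tetra`): there is `C > 0` such that for every `F ∈ GL⁺(3)`,
`dist²(F, SO(3)) ≤ C ∑ᵢ (|F wᵢ| − 1)²`, where `w₁,…,w₆` are the edge vectors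
of a regular tetrahedron of edge length 1. -/

noncomputable section

open scoped BigOperators

/-- The special orthogonal group SO(3) as a set of 3×3 real matrices. -/
def SO3 : Set (Matrix (Fin 3) (Fin 3) ℝ) :=
  {R | R.transpose * R = 1 ∧ R.det = 1}

/-- Square of the Frobenius norm of a 3×3 matrix. -/
def frobSq (F : Matrix (Fin 3) (Fin 3) ℝ) : ℝ :=
  ∑ i : Fin 3, ∑ j : Fin 3, (F i j) ^ 2

/-- Square of the (Frobenius) distance of `F` from `SO(3)`:
the infimum of `|F − R|²` over `R ∈ SO(3)`. -/
def distSqSO3 (F : Matrix (Fin 3) (Fin 3) ℝ) : ℝ :=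
  sInf {s : ℝ | ∃ R ∈ SO3, s = frobSq (F - R)}

/-- Euclidean norm on ℝ³. -/
def enorm3 (v : Fin 3 → ℝ) : ℝ :=
  Real.sqrt (∑ i : Fin 3, (v i) ^ 2)

/-- The six edge vectors of the regular tetrahedron of edge length 1:
`w₁ = (1,0,0)`, `w₂ = (1/2, √3/2, 0)`, `w₃ = w₂ − w₁`,
`w₄ = (1/2, √3/6, √6/3)`, `w₅ = w₄ − w₂`, `w₆ = w₄ − w₁`. -/
def tetraW : Fin 6 → (Fin 3 → ℝ) :=
  ![![1, 0, 0],
    ![1/2, Real.sqrt 3 / 2, 0],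
    ![-(1/2), Real.sqrt 3 / 2, 0],
    ![1/2, Real.sqrt 3 / 6, Real.sqrt 6 / 3],
    ![0, Real.sqrt 3 / 6 - Real.sqrt 3 / 2, Real.sqrt 6 / 3],
    ![-(1/2), Real.sqrt 3 / 6, Real.sqrt 6 / 3]]

/-! Let `F` have positive determinant and polar decomposition `F = R U`, so that `R ∈ SO(n)`. Since
`U ≥ 0` and `U² - 1 = (1 + U)(U - 1)`, one has `|F - R| = |U - 1| ≤ |U² - 1| = |FᴴF - 1|`. If
Hermitian matrices `A` are determined by the numbers `⟨w i, A w i⟩`, then finite dimensionality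
bounds `|FᴴF - 1|` by the differences `|F w i|² - |w i|²`, which are comparable to
`|F w i| - |w i|` as long as these stay bounded. When they do not, the trivial choice `R = 1`
suffices, as `|F|` is bounded by the lengths `|F w i|`. The edges of a tetrahedron determine
symmetric matrices by polarization. -/

section

open Matrix
open WithLp (toLp)
open scoped Matrix.Norms.Frobenius ComplexOrder

section

variable {ι l m n 𝕜 : Type*} [Fintype l] [Fintype m] [Fintype n] [RCLike 𝕜]

lemma frobenius_norm_sq_eq_re_trace (A : Matrix m n 𝕜) : ‖A‖ ^ 2 = RCLike.re (Aᴴ * A).trace := by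
  have hcol : (Aᴴ * A).trace = ∑ j, ∑ i, ((‖A i j‖ ^ 2 : ℝ) : 𝕜) := by
    simp only [trace, diag_apply, mul_apply, conjTranspose_apply, RCLike.star_def,
      RCLike.conj_mul, RCLike.ofReal_pow]
  rw [hcol, ← frobenius_norm_transpose, frobenius_norm_def, ← Real.sqrt_eq_rpow,
    Real.sq_sqrt (by positivity)]
  simp only [transpose_apply, Real.rpow_two, map_sum, RCLike.ofReal_re]

lemma frobenius_norm_mul_of_conjTranspose_mul_self [DecidableEq m] {R : Matrix l m 𝕜}
    (hR : Rᴴ * R = 1) (A : Matrix m n 𝕜) : ‖R * A‖ = ‖A‖ := by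
  refine (sq_eq_sq₀ (norm_nonneg _) (norm_nonneg _)).mp ?_
  rw [frobenius_norm_sq_eq_re_trace, frobenius_norm_sq_eq_re_trace, conjTranspose_mul,
    Matrix.mul_assoc, ← Matrix.mul_assoc Rᴴ, hR, Matrix.one_mul]

lemma frobenius_norm_le_norm_one_add_mul [DecidableEq m] {U : Matrix m m 𝕜} (hU : U.PosSemidef)
    (X : Matrix m n 𝕜) : ‖X‖ ≤ ‖(1 + U) * X‖ := by
  have hexpand : ((1 + U) * X)ᴴ * ((1 + U) * X) =
      Xᴴ * X + (2 : ℕ) • (Xᴴ * U * X) + (U * X)ᴴ * (U * X) := by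
    simp only [conjTranspose_mul, conjTranspose_add, hU.isHermitian.eq, Matrix.add_mul,
      Matrix.mul_add, Matrix.one_mul, Matrix.mul_assoc]
    simp only [← Matrix.mul_assoc, two_smul]
    abel
  have hcross : 0 ≤ RCLike.re (Xᴴ * U * X).trace :=
    (RCLike.nonneg_iff.mp (hU.conjTranspose_mul_mul_same X).trace_nonneg).1
  refine (sq_le_sq₀ (norm_nonneg _) (norm_nonneg _)).mp ?_
  calc ‖X‖ ^ 2 ≤ ‖X‖ ^ 2 + 2 * RCLike.re (Xᴴ * U * X).trace + ‖U * X‖ ^ 2 := by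
        linarith [sq_nonneg ‖U * X‖]
    _ = ‖(1 + U) * X‖ ^ 2 := by
        simp only [frobenius_norm_sq_eq_re_trace, hexpand, trace_add, trace_smul, map_add,
          map_nsmul]
        rw [nsmul_eq_mul, Nat.cast_ofNat]

lemma frobenius_norm_sub_one_le_norm_mul_self_sub_one [DecidableEq n] {U : Matrix n n 𝕜}
    (hU : U.PosSemidef) : ‖U - 1‖ ≤ ‖U * U - 1‖ := by
  have hfactor : U * U - 1 = (1 + U) * (U - 1) := by noncomm_ring
  exact hfactor ▸ frobenius_norm_le_norm_one_add_mul hU (U - 1)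

open scoped MatrixOrder in
lemma exists_unitary_mul_posSemidef [DecidableEq n] {F : Matrix n n 𝕜} (hF : IsUnit F.det) :
    ∃ R ∈ unitaryGroup n 𝕜, ∃ U : Matrix n n 𝕜, U.PosSemidef ∧ R * U = F := by
  have hgram : 0 ≤ Fᴴ * F := (posSemidef_conjTranspose_mul_self F).nonneg
  set U := CFC.sqrt (Fᴴ * F)
  have hU : U.PosSemidef := (CFC.sqrt_nonneg _).posSemidef
  have hUU : U * U = Fᴴ * F := CFC.sqrt_mul_sqrt_self _ hgram
  have hdet : IsUnit U.det := by
    have hsq : U.det * U.det = star F.det * F.det := by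
      rw [← det_mul, hUU, det_mul, det_conjTranspose]
    exact isUnit_of_mul_isUnit_left (hsq ▸ hF.star.mul hF)
  refine ⟨F * U⁻¹, mem_unitaryGroup_iff'.mpr ?_, U, hU, nonsing_inv_mul_cancel_right _ _ hdet⟩
  calc star (F * U⁻¹) * (F * U⁻¹) = U⁻¹ * (Fᴴ * F) * U⁻¹ := by
        rw [star_eq_conjTranspose, conjTranspose_mul, hU.isHermitian.inv.eq]
        simp only [Matrix.mul_assoc]
    _ = 1 := by
        rw [← hUU, nonsing_inv_mul_cancel_left _ _ hdet, mul_nonsing_inv _ hdet]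

lemma mem_specialUnitaryGroup_of_mul_posSemidef [DecidableEq n] {R U : Matrix n n 𝕜}
    (hR : R ∈ unitaryGroup n 𝕜) (hU : U.PosSemidef) (hdet : 0 < (R * U).det) :
    R ∈ specialUnitaryGroup n 𝕜 := by
  refine mem_specialUnitaryGroup_iff.mpr ⟨hR, ?_⟩
  have hnorm : ‖R.det‖ = 1 := CStarRing.norm_of_mem_unitary (det_of_mem_unitary hR)
  rw [det_mul] at hdet
  have hdetU : R.det * U.det = U.det := by
    rw [← RCLike.norm_of_nonneg' hdet.le, norm_mul, hnorm, one_mul,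
      RCLike.norm_of_nonneg' hU.det_nonneg]
  exact mul_eq_right₀ (right_ne_zero_of_mul hdet.ne') |>.mp hdetU

lemma star_dotProduct_self (v : n → 𝕜) : star v ⬝ᵥ v = ((‖toLp 2 v‖ ^ 2 : ℝ) : 𝕜) := by
  rw [dotProduct_comm, ← EuclideanSpace.inner_toLp_toLp, inner_self_eq_norm_sq_to_K,
    RCLike.ofReal_pow]

lemma star_dotProduct_conjTranspose_mul_self_mulVec (F : Matrix m n 𝕜) (v : n → 𝕜) :
    star v ⬝ᵥ (Fᴴ * F) *ᵥ v = ((‖toLp 2 (F *ᵥ v)‖ ^ 2 : ℝ) : 𝕜) := by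
  rw [← star_dotProduct_self, ← mulVec_mulVec, dotProduct_mulVec, vecMul_conjTranspose, star_star]

/-- The vectors `w i` separate Hermitian matrices: such a matrix `A` is determined by the values
`⟨w i, A w i⟩` of its quadratic form. This is the nondegeneracy of the family `w` under which the
lengths `|F w i|` control the distance of `F` from the rotations. -/
def SeparatesHermitian (w : ι → n → 𝕜) : Prop :=
  ∀ A : Matrix n n 𝕜, A.IsHermitian → (∀ i, star (w i) ⬝ᵥ A *ᵥ w i = 0) → A = 0

lemma SeparatesHermitian.eq_zero_of_mulVec_eq_zero {w : ι → n → 𝕜} (hw : SeparatesHermitian w)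
    {F : Matrix m n 𝕜} (hF : ∀ i, F *ᵥ w i = 0) : F = 0 := by
  refine conjTranspose_mul_self_eq_zero.mp
    (hw _ (isHermitian_conjTranspose_mul_self F) fun i ↦ ?_)
  rw [← mulVec_mulVec, hF, mulVec_zero, dotProduct_zero]

variable [Fintype ι]

lemma exists_norm_sq_le_mul_sum_norm_sq {K V W : Type*} [NontriviallyNormedField K]
    [CompleteSpace K] [NormedAddCommGroup V] [NormedSpace K V] [FiniteDimensional K V]
    [NormedAddCommGroup W] [NormedSpace K W] (f : ι → V →ₗ[K] W)
    (hf : ∀ x, (∀ i, f i x = 0) → x = 0) : ∃ C > 0, ∀ x, ‖x‖ ^ 2 ≤ C * ∑ i, ‖f i x‖ ^ 2 := by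
  let g : V →ₗ[K] PiLp 2 fun _ : ι ↦ W :=
    (WithLp.linearEquiv 2 K (ι → W)).symm.toLinearMap ∘ₗ LinearMap.pi f
  have hg : g.ker = ⊥ := (Submodule.eq_bot_iff _).mpr fun x hx ↦
    hf x fun i ↦ congrArg (fun y : PiLp 2 fun _ : ι ↦ W ↦ y i) hx
  obtain ⟨c, hc, hgc⟩ := g.exists_antilipschitzWith hg
  refine ⟨(c : ℝ) ^ 2, by positivity, fun x ↦ ?_⟩
  calc ‖x‖ ^ 2 ≤ (c * ‖g x‖) ^ 2 := by
        gcongr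
        exact hgc.le_mul_norm g.map_zero x
    _ = (c : ℝ) ^ 2 * ∑ i, ‖f i x‖ ^ 2 := by
        rw [mul_pow, PiLp.norm_sq_eq_of_L2]
        rfl

/-- The elastic energy of `F` on the family `w`: the sum over `i` of the squared change in the
Euclidean length of `w i` under `F`. The vectors pass through `toLp 2` because `n → 𝕜` itself
carries the supremum norm. -/
def stretchEnergy (w : ι → n → 𝕜) (F : Matrix m n 𝕜) : ℝ :=
  ∑ i, (‖toLp 2 (F *ᵥ w i)‖ - ‖toLp 2 (w i)‖) ^ 2

lemma stretchEnergy_nonneg (w : ι → n → 𝕜) (F : Matrix m n 𝕜) : 0 ≤ stretchEnergy w F :=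
  Finset.sum_nonneg fun _ _ ↦ sq_nonneg _

lemma sq_sub_sq_sq_le {a b : ℝ} (ha : 0 ≤ a) (hb : 0 ≤ b) (hab : a ≤ b + 1) :
    (a ^ 2 - b ^ 2) ^ 2 ≤ (2 * b + 1) ^ 2 * (a - b) ^ 2 := by
  calc (a ^ 2 - b ^ 2) ^ 2 = (a + b) ^ 2 * (a - b) ^ 2 := by ring
    _ ≤ (2 * b + 1) ^ 2 * (a - b) ^ 2 :=
      mul_le_mul_of_nonneg_right (pow_le_pow_left₀ (by positivity) (by linarith) 2) (sq_nonneg _)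

lemma sq_stretch_le_stretchEnergy (w : ι → n → 𝕜) (F : Matrix m n 𝕜) (i : ι) :
    (‖toLp 2 (F *ᵥ w i)‖ - ‖toLp 2 (w i)‖) ^ 2 ≤ stretchEnergy w F :=
  Finset.single_le_sum (f := fun i ↦ (‖toLp 2 (F *ᵥ w i)‖ - ‖toLp 2 (w i)‖) ^ 2)
    (fun _ _ ↦ sq_nonneg _) (Finset.mem_univ i)

lemma sum_sq_sub_sq_sq_le_mul_stretchEnergy {w : ι → n → 𝕜} {F : Matrix m n 𝕜}
    (hF : stretchEnergy w F ≤ 1) :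
    ∑ i, (‖toLp 2 (F *ᵥ w i)‖ ^ 2 - ‖toLp 2 (w i)‖ ^ 2) ^ 2 ≤
      (∑ i, (2 * ‖toLp 2 (w i)‖ + 1) ^ 2) * stretchEnergy w F := by
  rw [Finset.sum_mul]
  gcongr with i
  have hi := sq_stretch_le_stretchEnergy w F i
  have hclose := le_of_abs_le (sq_le_one_iff_abs_le_one _ |>.mp (hi.trans hF))
  exact (sq_sub_sq_sq_le (norm_nonneg _) (norm_nonneg _) (by linarith)).trans (by gcongr)

lemma sum_norm_mulVec_sq_le (w : ι → n → 𝕜) (F : Matrix m n 𝕜) :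
    ∑ i, ‖toLp 2 (F *ᵥ w i)‖ ^ 2 ≤
      2 * stretchEnergy w F + 2 * ∑ i, ‖toLp 2 (w i)‖ ^ 2 := by
  rw [stretchEnergy, Finset.mul_sum, Finset.mul_sum, ← Finset.sum_add_distrib]
  gcongr with i
  calc ‖toLp 2 (F *ᵥ w i)‖ ^ 2
      = (‖toLp 2 (F *ᵥ w i)‖ - ‖toLp 2 (w i)‖ + ‖toLp 2 (w i)‖) ^ 2 := by rw [sub_add_cancel]
    _ ≤ 2 * ((‖toLp 2 (F *ᵥ w i)‖ - ‖toLp 2 (w i)‖) ^ 2 + ‖toLp 2 (w i)‖ ^ 2) := add_sq_le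
    _ = _ := mul_add ..

namespace SeparatesHermitian

variable {w : ι → n → 𝕜}

lemma exists_norm_sq_le_mul_sum_form_sq (hw : SeparatesHermitian w) :
    ∃ C > 0, ∀ A : Matrix n n 𝕜, A.IsHermitian →
      ‖A‖ ^ 2 ≤ C * ∑ i, ‖star (w i) ⬝ᵥ A *ᵥ w i‖ ^ 2 := by
  let form (i : ι) : selfAdjoint.submodule ℝ (Matrix n n 𝕜) →ₗ[ℝ] 𝕜 :=
    { toFun A := star (w i) ⬝ᵥ A.1 *ᵥ w i
      map_add' A B := by simp only [Submodule.coe_add, add_mulVec, dotProduct_add]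
      map_smul' c A := by
        simp only [Submodule.coe_smul, smul_mulVec, dotProduct_smul, RingHom.id_apply] }
  obtain ⟨C, hC, hform⟩ := exists_norm_sq_le_mul_sum_norm_sq form
    fun A hA ↦ Subtype.ext (hw A.1 A.2 hA)
  exact ⟨C, hC, fun A hA ↦ hform ⟨A, hA⟩⟩

variable (m) in
lemma exists_norm_sq_le_mul_sum_mulVec_sq (hw : SeparatesHermitian w) :
    ∃ C > 0, ∀ F : Matrix m n 𝕜, ‖F‖ ^ 2 ≤ C * ∑ i, ‖toLp 2 (F *ᵥ w i)‖ ^ 2 := by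
  let eval (i : ι) : Matrix m n 𝕜 →ₗ[ℝ] EuclideanSpace 𝕜 m :=
    { toFun F := toLp 2 (F *ᵥ w i)
      map_add' F G := by rw [add_mulVec, WithLp.toLp_add]
      map_smul' c F := by rw [smul_mulVec, WithLp.toLp_smul, RingHom.id_apply] }
  exact exists_norm_sq_le_mul_sum_norm_sq eval fun F hF ↦
    hw.eq_zero_of_mulVec_eq_zero fun i ↦ (WithLp.toLp_eq_zero 2).mp (hF i)

lemma exists_norm_conjTranspose_mul_self_sub_one_sq_le [DecidableEq n]
    (hw : SeparatesHermitian w) :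
    ∃ C, ∀ F : Matrix m n 𝕜, stretchEnergy w F ≤ 1 →
      ‖Fᴴ * F - 1‖ ^ 2 ≤ C * stretchEnergy w F := by
  obtain ⟨K, hK, hform⟩ := hw.exists_norm_sq_le_mul_sum_form_sq
  set B := ∑ i, (2 * ‖toLp 2 (w i)‖ + 1) ^ 2
  refine ⟨K * B, fun F hF ↦ ?_⟩
  have hdefect (i : ι) : ‖star (w i) ⬝ᵥ (Fᴴ * F - 1) *ᵥ w i‖ ^ 2 =
      (‖toLp 2 (F *ᵥ w i)‖ ^ 2 - ‖toLp 2 (w i)‖ ^ 2) ^ 2 := by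
    rw [sub_mulVec, one_mulVec, dotProduct_sub, star_dotProduct_conjTranspose_mul_self_mulVec,
      star_dotProduct_self, ← RCLike.ofReal_sub, RCLike.norm_ofReal, sq_abs]
  calc ‖Fᴴ * F - 1‖ ^ 2 ≤ K * ∑ i, ‖star (w i) ⬝ᵥ (Fᴴ * F - 1) *ᵥ w i‖ ^ 2 :=
        hform _ ((isHermitian_conjTranspose_mul_self F).sub isHermitian_one)
    _ ≤ K * (B * stretchEnergy w F) := by
        simp only [hdefect]
        gcongr
        exact sum_sq_sub_sq_sq_le_mul_stretchEnergy hF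
    _ = K * B * stretchEnergy w F := (mul_assoc ..).symm

lemma exists_norm_sub_one_sq_le [DecidableEq n] (hw : SeparatesHermitian w) :
    ∃ C > 0, ∀ F : Matrix n n 𝕜, 1 ≤ stretchEnergy w F → ‖F - 1‖ ^ 2 ≤ C * stretchEnergy w F := by
  obtain ⟨K, hK, hnorm⟩ := hw.exists_norm_sq_le_mul_sum_mulVec_sq n
  set S := ∑ i, ‖toLp 2 (w i)‖ ^ 2
  set N := ‖(1 : Matrix n n 𝕜)‖ ^ 2
  refine ⟨4 * K * (1 + S) + 2 * N, by positivity, fun F hF ↦ ?_⟩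
  calc ‖F - 1‖ ^ 2 ≤ 2 * (‖F‖ ^ 2 + N) :=
        (pow_le_pow_left₀ (norm_nonneg _) (norm_sub_le _ _) 2).trans add_sq_le
    _ ≤ 2 * (K * (2 * stretchEnergy w F + 2 * S) + N) := by
        gcongr
        exact (hnorm F).trans (by gcongr; exact sum_norm_mulVec_sq_le w F)
    _ ≤ 2 * (K * (2 * stretchEnergy w F + 2 * (S * stretchEnergy w F)) +
          N * stretchEnergy w F) := by
        gcongr <;> exact le_mul_of_one_le_right (by positivity) hF
    _ = (4 * K * (1 + S) + 2 * N) * stretchEnergy w F := by ring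

end SeparatesHermitian

lemma exists_specialUnitary_norm_sub_le [DecidableEq n] {F : Matrix n n 𝕜} (hF : 0 < F.det) :
    ∃ R ∈ specialUnitaryGroup n 𝕜, ‖F - R‖ ≤ ‖Fᴴ * F - 1‖ := by
  obtain ⟨R, hR, U, hU, rfl⟩ := exists_unitary_mul_posSemidef hF.ne'.isUnit
  have hRR : Rᴴ * R = 1 := mem_unitaryGroup_iff'.mp hR
  refine ⟨R, mem_specialUnitaryGroup_of_mul_posSemidef hR hU hF, ?_⟩
  calc ‖R * U - R‖ = ‖R * (U - 1)‖ := by rw [Matrix.mul_sub, Matrix.mul_one]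
    _ = ‖U - 1‖ := frobenius_norm_mul_of_conjTranspose_mul_self hRR _
    _ ≤ ‖U * U - 1‖ := frobenius_norm_sub_one_le_norm_mul_self_sub_one hU
    _ = ‖(R * U)ᴴ * (R * U) - 1‖ := by
        rw [conjTranspose_mul, hU.isHermitian.eq, Matrix.mul_assoc, ← Matrix.mul_assoc Rᴴ, hRR,
          Matrix.one_mul]

theorem tetra_rigidity_general [DecidableEq n] {w : ι → n → 𝕜} (hw : SeparatesHermitian w) :
    ∃ C > 0, ∀ F : Matrix n n 𝕜, 0 < F.det → ∃ R ∈ specialUnitaryGroup n 𝕜,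
      ‖F - R‖ ^ 2 ≤ C * stretchEnergy w F := by
  obtain ⟨C₁, hsmall⟩ := hw.exists_norm_conjTranspose_mul_self_sub_one_sq_le (m := n)
  obtain ⟨C₂, hC₂, hlarge⟩ := hw.exists_norm_sub_one_sq_le
  refine ⟨max C₁ C₂, lt_max_of_lt_right hC₂, fun F hF ↦ ?_⟩
  have hE := stretchEnergy_nonneg w F
  rcases le_total (stretchEnergy w F) 1 with h | h
  · obtain ⟨R, hR, hFR⟩ := exists_specialUnitary_norm_sub_le hF
    refine ⟨R, hR, ?_⟩
    calc ‖F - R‖ ^ 2 ≤ ‖Fᴴ * F - 1‖ ^ 2 := by gcongr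
      _ ≤ C₁ * stretchEnergy w F := hsmall F h
      _ ≤ max C₁ C₂ * stretchEnergy w F := by gcongr; exact le_max_left ..
  · refine ⟨1, one_mem _, (hlarge F h).trans ?_⟩
    gcongr; exact le_max_right ..

end

lemma SeparatesHermitian.of_edges {ι κ n : Type*} [Fintype n] {w : ι → n → ℝ} {b : κ → n → ℝ}
    (hspan : Submodule.span ℝ (Set.range b) = ⊤) (hvertex : ∀ k, b k ∈ Set.range w)
    (hedge : Pairwise fun k l ↦ b k - b l ∈ Set.range w ∨ b l - b k ∈ Set.range w) :
    SeparatesHermitian w := by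
  classical
  intro A hA hform
  have hzero {v : n → ℝ} (hv : v ∈ Set.range w) : v ⬝ᵥ A *ᵥ v = 0 := by
    obtain ⟨i, rfl⟩ := hv
    exact hform i
  have hsymm (u v : n → ℝ) : u ⬝ᵥ A *ᵥ v = v ⬝ᵥ A *ᵥ u := by
    rw [dotProduct_mulVec, dotProduct_comm, ← mulVec_transpose,
      ← conjTranspose_eq_transpose_of_trivial, hA.eq]
  have hexpand (u v : n → ℝ) :
      (u - v) ⬝ᵥ A *ᵥ (u - v) = u ⬝ᵥ A *ᵥ u - 2 * (u ⬝ᵥ A *ᵥ v) + v ⬝ᵥ A *ᵥ v := by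
    rw [mulVec_sub, sub_dotProduct, dotProduct_sub, dotProduct_sub, hsymm v u]
    ring
  have hpair (k l : κ) : b k ⬝ᵥ A *ᵥ b l = 0 := by
    rcases eq_or_ne k l with rfl | hkl
    · exact hzero (hvertex k)
    have hk := hzero (hvertex k)
    have hl := hzero (hvertex l)
    rcases hedge hkl with h | h
    · linarith [hzero h, hexpand (b k) (b l)]
    · linarith [hzero h, hexpand (b l) (b k), hsymm (b k) (b l)]
  refine (toLinearMap₂' ℝ).injective <|
    LinearMap.ext_on_range hspan fun k ↦ LinearMap.ext_on_range hspan fun l ↦ ?_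
  rw [toLinearMap₂'_apply', map_zero, hpair]
  rfl

lemma separatesHermitian_tetraW : SeparatesHermitian tetraW := by
  let vertex : Fin 3 → Fin 3 → ℝ := ![tetraW 0, tetraW 1, tetraW 3]
  have hdet : (of vertex).det = √3 / 2 * (√6 / 3) := by
    simp [vertex, tetraW, det_fin_three]
  have hspan : Submodule.span ℝ (Set.range vertex) = ⊤ :=
    LinearIndependent.span_eq_top_of_card_eq_finrank'
      (linearIndependent_rows_of_det_ne_zero (hdet ▸ by positivity)) (by simp)
  refine SeparatesHermitian.of_edges hspan ?_ ?_
  · intro k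
    fin_cases k
    exacts [⟨0, rfl⟩, ⟨1, rfl⟩, ⟨3, rfl⟩]
  · have h₁ : tetraW 2 = tetraW 1 - tetraW 0 := by
      ext i; fin_cases i <;> simp [tetraW]; norm_num
    have h₂ : tetraW 4 = tetraW 3 - tetraW 1 := by
      ext i; fin_cases i <;> simp [tetraW]
    have h₃ : tetraW 5 = tetraW 3 - tetraW 0 := by
      ext i; fin_cases i <;> simp [tetraW]; norm_num
    intro k l hkl
    fin_cases k <;> fin_cases l <;> try exact absurd rfl hkl
    exacts [.inr ⟨2, h₁⟩, .inr ⟨5, h₃⟩, .inl ⟨2, h₁⟩, .inr ⟨4, h₂⟩, .inl ⟨5, h₃⟩, .inl ⟨4, h₂⟩]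

lemma enorm3_eq_norm_toLp (v : Fin 3 → ℝ) : enorm3 v = ‖toLp 2 v‖ := by
  simp only [enorm3, EuclideanSpace.norm_eq, Real.norm_eq_abs, sq_abs]

lemma norm_toLp_tetraW (i : Fin 6) : ‖toLp 2 (tetraW i)‖ = 1 := by
  have h₃ : √3 ^ 2 = 3 := Real.sq_sqrt (by norm_num)
  have h₆ : √6 ^ 2 = 6 := Real.sq_sqrt (by norm_num)
  rw [← enorm3_eq_norm_toLp, enorm3, Real.sqrt_eq_one, Fin.sum_univ_three]
  fin_cases i <;> simp [tetraW] <;> linarith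

lemma frobSq_eq_norm_sq (F : Matrix (Fin 3) (Fin 3) ℝ) : frobSq F = ‖F‖ ^ 2 := by
  rw [frobenius_norm_def, ← Real.sqrt_eq_rpow, Real.sq_sqrt (by positivity)]
  simp only [frobSq, Real.norm_eq_abs, Real.rpow_two, sq_abs]

lemma distSqSO3_le_norm_sub_sq (F : Matrix (Fin 3) (Fin 3) ℝ) {R : Matrix (Fin 3) (Fin 3) ℝ}
    (hR : R ∈ specialUnitaryGroup (Fin 3) ℝ) : distSqSO3 F ≤ ‖F - R‖ ^ 2 := by
  have hbdd : BddBelow {s : ℝ | ∃ R ∈ SO3, s = frobSq (F - R)} := by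
    refine ⟨0, ?_⟩
    rintro _ ⟨R, -, rfl⟩
    exact frobSq_eq_norm_sq (F - R) ▸ sq_nonneg _
  obtain ⟨hRunitary, hdet⟩ := mem_specialUnitaryGroup_iff.mp hR
  have hRR : Rᵀ * R = 1 :=
    conjTranspose_eq_transpose_of_trivial R ▸ mem_unitaryGroup_iff'.mp hRunitary
  exact csInf_le hbdd ⟨R, ⟨hRR, hdet⟩, (frobSq_eq_norm_sq _).symm⟩

end

theorem tetra_rigidity :
    ∃ C > 0, ∀ F : Matrix (Fin 3) (Fin 3) ℝ, 0 < F.det →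
      distSqSO3 F ≤ C * ∑ i : Fin 6, (enorm3 (F.mulVec (tetraW i)) - 1) ^ 2 := by
  obtain ⟨C, hC, hrigid⟩ := tetra_rigidity_general separatesHermitian_tetraW
  refine ⟨C, hC, fun F hF ↦ ?_⟩
  obtain ⟨R, hR, hFR⟩ := hrigid F hF
  simpa only [stretchEnergy, enorm3_eq_norm_toLp, norm_toLp_tetraW] using
    (distSqSO3_le_norm_sub_sq F hR).trans hFR

end
end

section
/- For any two distinct points x, y of the face-centred cubic lattice Λ^fcc, the intersection C(x) ∩ C(y) of their Voronoi cells has positive two-dimensional Hausdorff measure if and only if |x − y| = 1; that is, two Voronoi cells share a facet exactly when the two lattice points are at the minimal distance 1. -/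
/- STATEMENT 12: for distinct points `x, y` of the face-centred cubic lattice,
the intersection of their Voronoi cells has positive two-dimensional Hausdorff
measure if and only if `|x − y| = 1`.  We work in `EuclideanSpace ℝ (Fin 3)`
so that distances and the Hausdorff measure are the Euclidean ones. -/

noncomputable section

open scoped MeasureTheory

/-- Generators of the face-centred cubic lattice. -/
def vfcc : Fin 3 → EuclideanSpace ℝ (Fin 3) :=
  ![(WithLp.equiv 2 (Fin 3 → ℝ)).symm ![Real.sqrt 2, 0, 0],
    (WithLp.equiv 2 (Fin 3 → ℝ)).symm ![Real.sqrt 2 / 2, Real.sqrt 2 / 2, 0],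
    (WithLp.equiv 2 (Fin 3 → ℝ)).symm ![0, Real.sqrt 2 / 2, Real.sqrt 2 / 2]]

/-- The face-centred cubic lattice `Λ^fcc`. -/
def Lfcc : Set (EuclideanSpace ℝ (Fin 3)) :=
  {x | ∃ m : Fin 3 → ℤ,
    x = (m 0 : ℝ) • vfcc 0 + (m 1 : ℝ) • vfcc 1 + (m 2 : ℝ) • vfcc 2}

/-- The Voronoi cell of a lattice point `x ∈ Λ^fcc`. -/
def vorFcc (x : EuclideanSpace ℝ (Fin 3)) : Set (EuclideanSpace ℝ (Fin 3)) :=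
  {z | ∀ y ∈ Lfcc, dist z x ≤ dist z y}

/-!
The face-centred cubic lattice is the root lattice `D₃`, and the argument works for every `D_n`
with `n ≥ 2`.  If `p, q` are further sites with the same midpoint as `x, y` and
`|p - q| ≤ |x - y|`, Apollonius's theorem at a common point `z` of the cells of `x` and `y` gives
`|z - p|² + |z - q|² ≤ |z - x|² + |z - y|²`.  Since no site is nearer to `z` than `x` and `y`, all
four distances agree, so the cells meet in codimension at least two.  If instead `x, y` realise
the minimal distance of the set of sites, Apollonius's theorem puts every other site at distance at
least `√3 / 2 * |x - y|` from the midpoint of `x` and `y`, so a small disc of the perpendicular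
bisector around that midpoint lies in both cells.  In `D_n` every nonzero vector `v` has a root `u`
with `⟪u, v⟫ ≥ |u|²`, so for `|x - y| ≠ 1` the points `p = x + u`, `q = y - u` with `v = y - x`
realise the first case.
-/

open MeasureTheory Metric Module AffineSubspace EuclideanGeometry

section AffineSubspace

variable {V P : Type*} [NormedAddCommGroup V] [NormedSpace ℝ V] [MetricSpace P]
  [NormedAddTorsor V P]

lemma isometry_direction_vadd (s : AffineSubspace ℝ P) (p : P) :
    Isometry fun w : s.direction ↦ (w : V) +ᵥ p :=
  (IsometryEquiv.vaddConst p).isometry.comp isometry_subtype_coe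

lemma range_direction_vadd {s : AffineSubspace ℝ P} {p : P} (hp : p ∈ s) :
    Set.range (fun w : s.direction ↦ (w : V) +ᵥ p) = s := by
  ext z
  refine ⟨?_, fun hz ↦ ⟨⟨z -ᵥ p, vsub_mem_direction hz hp⟩, vsub_vadd z p⟩⟩
  rintro ⟨w, rfl⟩
  exact vadd_mem_of_mem_direction w.2 hp

variable [MeasurableSpace P] [BorelSpace P]

lemma hausdorffMeasure_affineSubspace_eq_zero {s : AffineSubspace ℝ P}
    [FiniteDimensional ℝ s.direction] {d : ℕ} (hd : finrank ℝ s.direction < d) :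
    μH[d] (s : Set P) = 0 := by
  obtain hs | ⟨p, hp⟩ := (s : Set P).eq_empty_or_nonempty
  · simp [hs]
  have hdim : dimH (s : Set P) = finrank ℝ s.direction := by
    rw [← range_direction_vadd hp, ← Set.image_univ, (isometry_direction_vadd s p).dimH_image,
      Real.dimH_univ_eq_finrank]
  have := hausdorffMeasure_of_dimH_lt (s := (s : Set P)) (d := d) (by rw [hdim]; exact_mod_cast hd)
  exact_mod_cast this

lemma hausdorffMeasure_affineSubspace_inter_ball_pos {s : AffineSubspace ℝ P}
    [FiniteDimensional ℝ s.direction] {p : P} (hp : p ∈ s) {r : ℝ} (hr : 0 < r) :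
    0 < μH[finrank ℝ s.direction] ((s : Set P) ∩ ball p r) := by
  have himage : (fun w : s.direction ↦ (w : V) +ᵥ p) '' ball 0 r = (s : Set P) ∩ ball p r := by
    have hball : (fun w : s.direction ↦ (w : V) +ᵥ p) ⁻¹' ball p r = ball 0 r := by
      simpa using (isometry_direction_vadd s p).preimage_ball 0 r
    rw [← hball, Set.image_preimage_eq_range_inter, range_direction_vadd hp]
  borelize ↥s.direction
  rw [← himage, (isometry_direction_vadd s p).hausdorffMeasure_image (.inl (by positivity))]
  exact measure_ball_pos _ _ hr

end AffineSubspace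

section PerpBisector

variable {V P : Type*} [NormedAddCommGroup V] [InnerProductSpace ℝ V] [MetricSpace P]
  [NormedAddTorsor V P] {x y p : P}

lemma not_perpBisector_le_perpBisector (hpx : p ≠ x) (hpy : p ≠ y) :
    ¬ perpBisector x y ≤ perpBisector x p := by
  intro hle
  obtain ⟨t, ht⟩ : ∃ t : ℝ, t • (y -ᵥ x) = p -ᵥ x := by
    have := direction_le hle
    rw [direction_perpBisector, direction_perpBisector,
      Submodule.orthogonal_le_orthogonal_iff] at this
    exact Submodule.mem_span_singleton.1 (this (Submodule.mem_span_singleton_self _))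
  have hmid : t * (1 - t) * ‖y -ᵥ x‖ ^ 2 = 0 := by
    have := mem_perpBisector_iff_inner_eq.1 (hle (midpoint_mem_perpBisector x y))
    rw [dist_eq_norm_vsub' V x p, ← ht, norm_smul, midpoint_vsub_left, real_inner_smul_left,
      real_inner_smul_right, real_inner_self_eq_norm_sq, mul_pow, Real.norm_eq_abs, sq_abs,
      invOf_eq_inv] at this
    linarith
  simp only [mul_eq_zero, pow_eq_zero_iff two_ne_zero, norm_eq_zero, sub_eq_zero] at hmid
  obtain (rfl | rfl) | hyx := hmid
  · exact hpx (vsub_eq_zero_iff_eq.1 (by rw [← ht, zero_smul]))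
  · exact hpy (vsub_left_cancel (by rw [← ht, one_smul]))
  · exact hpx (vsub_eq_zero_iff_eq.1 (by rw [← ht, hyx, smul_zero]))

variable {d : ℕ}

lemma finrank_direction_perpBisector (hd : finrank ℝ V = d + 1) (hxy : x ≠ y) :
    finrank ℝ (perpBisector x y).direction = d := by
  have := Fact.mk hd
  rw [direction_perpBisector]
  exact Submodule.finrank_orthogonal_span_singleton (vsub_ne_zero.2 hxy.symm)

variable [MeasurableSpace P] [BorelSpace P]

lemma hausdorffMeasure_perpBisector_inf_eq_zero (hd : finrank ℝ V = d + 1) (hxy : x ≠ y)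
    (hpx : p ≠ x) (hpy : p ≠ y) :
    μH[d] ((perpBisector x y ⊓ perpBisector x p : AffineSubspace ℝ P) : Set P) = 0 := by
  have : FiniteDimensional ℝ V := .of_finrank_pos (by lia)
  obtain hempty | hne :=
    ((perpBisector x y ⊓ perpBisector x p : AffineSubspace ℝ P) : Set P).eq_empty_or_nonempty
  · rw [hempty, measure_empty]
  have hlt : perpBisector x y ⊓ perpBisector x p < perpBisector x y :=
    inf_lt_left.2 (not_perpBisector_le_perpBisector hpx hpy)
  apply hausdorffMeasure_affineSubspace_eq_zero
  rw [← finrank_direction_perpBisector hd hxy]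
  exact Submodule.finrank_lt_finrank_of_lt (direction_lt_of_nonempty hlt hne)

end PerpBisector

/-- The Voronoi cell of the site `x` in the Voronoi diagram of an arbitrary set of sites `L`. -/
def voronoiCell {X : Type*} [Dist X] (L : Set X) (x : X) : Set X :=
  {z | ∀ y ∈ L, dist z x ≤ dist z y}

section voronoiCell

variable {V P : Type*} [NormedAddCommGroup V] [InnerProductSpace ℝ V] [MetricSpace P]
  [NormedAddTorsor V P] {L : Set P} {x y p q : P}

lemma voronoiCell_inter_subset_perpBisector_inf (hp : p ∈ L) (hq : q ∈ L)
    (hmid : midpoint ℝ p q = midpoint ℝ x y) (hdist : dist p q ≤ dist x y) :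
    voronoiCell L x ∩ voronoiCell L y ⊆
      ((perpBisector x y ⊓ perpBisector x p : AffineSubspace ℝ P) : Set P) := by
  rintro z ⟨hzx, hzy⟩
  have hsum : dist z p ^ 2 + dist z q ^ 2 ≤ dist z x ^ 2 + dist z y ^ 2 := by
    rw [dist_sq_add_dist_sq_eq_two_mul_dist_midpoint_sq_add_half_dist_sq,
      dist_sq_add_dist_sq_eq_two_mul_dist_midpoint_sq_add_half_dist_sq, hmid]
    gcongr
  have hxp : dist z x ^ 2 ≤ dist z p ^ 2 := by gcongr; exact hzx p hp
  have hxq : dist z x ^ 2 ≤ dist z q ^ 2 := by gcongr; exact hzx q hq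
  have hyp : dist z y ^ 2 ≤ dist z p ^ 2 := by gcongr; exact hzy p hp
  have hyq : dist z y ^ 2 ≤ dist z q ^ 2 := by gcongr; exact hzy q hq
  refine ⟨mem_perpBisector_iff_dist_eq.2 ?_, mem_perpBisector_iff_dist_eq.2 ?_⟩ <;>
  · rw [← sq_eq_sq₀ dist_nonneg dist_nonneg]
    linarith

lemma perpBisector_inter_ball_subset_voronoiCell
    (hx : ∀ p ∈ L, p ≠ x → dist x y ≤ dist p x) (hy : ∀ p ∈ L, p ≠ y → dist x y ≤ dist p y) :
    (perpBisector x y : Set P) ∩ ball (midpoint ℝ x y) (dist x y / 8) ⊆ voronoiCell L x := by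
  rintro z ⟨hz, hzm⟩ p hp
  rw [mem_ball] at hzm
  obtain rfl | hpx := eq_or_ne p x
  · rfl
  obtain rfl | hpy := eq_or_ne p y
  · exact (mem_perpBisector_iff_dist_eq.1 hz).le
  have hpm : 3 / 4 * dist x y ≤ dist p (midpoint ℝ x y) := by
    have happ := dist_sq_add_dist_sq_eq_two_mul_dist_midpoint_sq_add_half_dist_sq p x y
    have hsqx : dist x y ^ 2 ≤ dist p x ^ 2 := by gcongr; exact hx p hp hpx
    have hsqy : dist x y ^ 2 ≤ dist p y ^ 2 := by gcongr; exact hy p hp hpy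
    refine abs_le_of_sq_le_sq' ?_ dist_nonneg |>.2
    linarith [sq_nonneg (dist x y)]
  have hxm : dist (midpoint ℝ x y) x = dist x y / 2 := by
    rw [dist_midpoint_left, Real.norm_two]; ring
  calc dist z x ≤ dist z (midpoint ℝ x y) + dist (midpoint ℝ x y) x := dist_triangle ..
    _ ≤ dist p (midpoint ℝ x y) - dist z (midpoint ℝ x y) := by linarith
    _ ≤ dist z p := by linarith [dist_triangle_left p (midpoint ℝ x y) z]

variable [MeasurableSpace P] [BorelSpace P] {d : ℕ}

lemma hausdorffMeasure_voronoiCell_inter_eq_zero (hd : finrank ℝ V = d + 1) (hxy : x ≠ y)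
    (hp : p ∈ L) (hq : q ∈ L) (hpx : p ≠ x) (hpy : p ≠ y)
    (hmid : midpoint ℝ p q = midpoint ℝ x y) (hdist : dist p q ≤ dist x y) :
    μH[d] (voronoiCell L x ∩ voronoiCell L y) = 0 :=
  measure_mono_null (voronoiCell_inter_subset_perpBisector_inf hp hq hmid hdist)
    (hausdorffMeasure_perpBisector_inf_eq_zero hd hxy hpx hpy)

lemma hausdorffMeasure_voronoiCell_inter_pos (hd : finrank ℝ V = d + 1) (hxy : x ≠ y)
    (hx : ∀ p ∈ L, p ≠ x → dist x y ≤ dist p x) (hy : ∀ p ∈ L, p ≠ y → dist x y ≤ dist p y) :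
    0 < μH[d] (voronoiCell L x ∩ voronoiCell L y) := by
  have : FiniteDimensional ℝ V := .of_finrank_pos (by lia)
  have hball := hausdorffMeasure_affineSubspace_inter_ball_pos (midpoint_mem_perpBisector x y)
    (r := dist x y / 8) (by have := dist_pos.2 hxy; positivity)
  rw [finrank_direction_perpBisector hd hxy] at hball
  refine hball.trans_le (measure_mono (Set.subset_inter
    (perpBisector_inter_ball_subset_voronoiCell hx hy) ?_))
  rw [perpBisector_comm, midpoint_comm, dist_comm]
  simp only [dist_comm x y] at hx hy
  exact perpBisector_inter_ball_subset_voronoiCell hy hx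

end voronoiCell

section AddSubgroup

variable {E : Type*} [NormedAddCommGroup E] [InnerProductSpace ℝ E] [MeasurableSpace E]
  [BorelSpace E] {Λ : AddSubgroup E} {x y u : E} {d : ℕ}

lemma hausdorffMeasure_voronoiCell_inter_eq_zero_of_norm_sq_le_inner (hd : finrank ℝ E = d + 1)
    (hx : x ∈ Λ) (hy : y ∈ Λ) (hxy : x ≠ y) (hu : u ∈ Λ) (hu₀ : u ≠ 0) (huxy : u ≠ y - x)
    (hinner : ‖u‖ ^ 2 ≤ inner ℝ u (y - x)) :
    μH[d] (voronoiCell (Λ : Set E) x ∩ voronoiCell (Λ : Set E) y) = 0 := by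
  have hdiag : dist (x + u) (y - u) ≤ dist x y := by
    rw [dist_comm x y, dist_comm (x + u), dist_eq_norm, dist_eq_norm,
      ← sq_le_sq₀ (norm_nonneg _) (norm_nonneg _),
      show y - u - (x + u) = (y - x) - (2 : ℝ) • u by rw [two_smul]; abel, norm_sub_sq_real,
      real_inner_smul_right, real_inner_comm, norm_smul, mul_pow, Real.norm_two]
    linarith
  refine hausdorffMeasure_voronoiCell_inter_eq_zero hd hxy (add_mem hx hu) (sub_mem hy hu)
    (by simpa) (fun h ↦ huxy (eq_sub_of_add_eq' h)) ?_ hdiag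
  rw [midpoint_eq_smul_add, midpoint_eq_smul_add, add_add_sub_cancel]

lemma hausdorffMeasure_voronoiCell_inter_pos_of_forall_dist_le_norm (hd : finrank ℝ E = d + 1)
    (hx : x ∈ Λ) (hy : y ∈ Λ) (hxy : x ≠ y) (hmin : ∀ v ∈ Λ, v ≠ 0 → dist x y ≤ ‖v‖) :
    0 < μH[d] (voronoiCell (Λ : Set E) x ∩ voronoiCell (Λ : Set E) y) := by
  have hdist : ∀ q ∈ Λ, ∀ p ∈ Λ, p ≠ q → dist x y ≤ dist p q := fun q hq p hp hpq ↦ by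
    simpa only [dist_eq_norm] using hmin (p - q) (sub_mem hp hq) (sub_ne_zero.2 hpq)
  exact hausdorffMeasure_voronoiCell_inter_pos hd hxy (hdist x hx) (hdist y hy)

end AddSubgroup

/-- The checkerboard lattice of integer vectors with even coordinate sum. -/
def checkerboard (ι : Type*) [Fintype ι] : AddSubgroup (ι → ℤ) where
  carrier := {a | Even (∑ i, a i)}
  zero_mem' := by simp
  add_mem' ha hb := by simpa [Finset.sum_add_distrib] using ha.add hb
  neg_mem' ha := by simpa using ha

section checkerboard

variable {ι : Type*} [Fintype ι] {a : ι → ℤ}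

lemma mem_checkerboard : a ∈ checkerboard ι ↔ Even (∑ i, a i) := .rfl

lemma even_dotProduct_self_of_mem_checkerboard (ha : a ∈ checkerboard ι) : Even (a ⬝ᵥ a) := by
  have hsum : a ⬝ᵥ a = ∑ i, a i * (a i - 1) + ∑ i, a i := by
    rw [dotProduct, ← Finset.sum_add_distrib]
    exact Finset.sum_congr rfl fun i _ ↦ by ring
  rw [hsum]
  exact (Finset.even_sum _ fun i _ ↦ Int.even_mul_pred_self (a i)).add ha

lemma two_le_dotProduct_self_of_mem_checkerboard (ha : a ∈ checkerboard ι) (ha₀ : a ≠ 0) :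
    2 ≤ a ⬝ᵥ a := by
  obtain ⟨k, hk⟩ := even_dotProduct_self_of_mem_checkerboard ha
  have hnonneg : 0 ≤ a ⬝ᵥ a := Finset.sum_nonneg fun i _ ↦ mul_self_nonneg (a i)
  have hne : a ⬝ᵥ a ≠ 0 := mt dotProduct_self_eq_zero.1 ha₀
  lia

variable [Nontrivial ι]

lemma exists_two_le_abs_add_abs_of_mem_checkerboard (ha : a ∈ checkerboard ι) (ha₀ : a ≠ 0) :
    ∃ i j, i ≠ j ∧ 2 ≤ |a i| + |a j| := by
  obtain ⟨i, hi⟩ := Function.ne_iff.1 ha₀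
  have hi_pos : 0 < |a i| := abs_pos.2 hi
  by_cases hsupp : ∃ j, j ≠ i ∧ a j ≠ 0
  · obtain ⟨j, hji, hj⟩ := hsupp
    have hj_pos : 0 < |a j| := abs_pos.2 hj
    exact ⟨i, j, hji.symm, by lia⟩
  · push Not at hsupp
    obtain ⟨j, hji⟩ := exists_ne i
    have heven : Even |a i| := by
      rw [even_abs, ← Fintype.sum_eq_single i hsupp]
      exact ha
    obtain ⟨k, hk⟩ := heven
    exact ⟨i, j, hji.symm, by have := abs_nonneg (a j); lia⟩

lemma exists_root_mem_checkerboard (ha : a ∈ checkerboard ι) (ha₀ : a ≠ 0) :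
    ∃ e ∈ checkerboard ι, e ⬝ᵥ e = 2 ∧ 2 ≤ e ⬝ᵥ a := by
  classical
  obtain ⟨i, j, hij, habs⟩ := exists_two_le_abs_add_abs_of_mem_checkerboard ha ha₀
  obtain ⟨s, hs, hsa⟩ := Int.exists_unit_of_abs (a i)
  obtain ⟨t, ht, hta⟩ := Int.exists_unit_of_abs (a j)
  rw [Int.natCast_natAbs] at hsa hta
  refine ⟨Pi.single i s + Pi.single j t, ?_, ?_, ?_⟩
  · rw [mem_checkerboard]
    obtain rfl | rfl := Int.isUnit_iff.1 hs <;> obtain rfl | rfl := Int.isUnit_iff.1 ht <;>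
      simp [Finset.sum_add_distrib]
  · simp [hij, hij.symm, Int.isUnit_mul_self, hs, ht]
  · simp only [add_dotProduct, single_dotProduct]
    lia

end checkerboard

/-- Integer vectors as Euclidean vectors, rescaled by `√2 / 2` so that the roots `±eᵢ ± eⱼ` of
the checkerboard lattice become unit vectors. -/
def scaledIntVec (ι : Type*) [Fintype ι] : (ι → ℤ) →+ EuclideanSpace ℝ ι where
  toFun a := (√2 / 2) • WithLp.toLp 2 fun i ↦ (a i : ℝ)
  map_zero' := by ext; simp
  map_add' a b := by ext; simp [mul_add]

/-- The root lattice `D_n`, normalised so that its roots are unit vectors. -/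
def rootLatticeD (ι : Type*) [Fintype ι] : AddSubgroup (EuclideanSpace ℝ ι) :=
  (checkerboard ι).map (scaledIntVec ι)

section rootLatticeD

variable {ι : Type*} [Fintype ι]

@[simp]
lemma scaledIntVec_apply (a : ι → ℤ) (i : ι) : scaledIntVec ι a i = √2 / 2 * a i := rfl

lemma inner_scaledIntVec (a b : ι → ℤ) :
    inner ℝ (scaledIntVec ι a) (scaledIntVec ι b) = (a ⬝ᵥ b : ℤ) / 2 := by
  have hscale : √2 / 2 * (√2 / 2) = (1 / 2 : ℝ) := by
    rw [div_mul_div_comm, Real.mul_self_sqrt zero_le_two]; norm_num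
  simp only [PiLp.inner_apply, scaledIntVec_apply, dotProduct, Int.cast_sum, Int.cast_mul,
    Finset.sum_div, RCLike.inner_apply, conj_trivial]
  exact Finset.sum_congr rfl fun i _ ↦ by linear_combination (a i * b i : ℝ) * hscale

lemma norm_sq_scaledIntVec (a : ι → ℤ) : ‖scaledIntVec ι a‖ ^ 2 = (a ⬝ᵥ a : ℤ) / 2 := by
  rw [← real_inner_self_eq_norm_sq, inner_scaledIntVec]

variable {v : EuclideanSpace ℝ ι}

lemma one_le_norm_of_mem_rootLatticeD (hv : v ∈ rootLatticeD ι) (hv₀ : v ≠ 0) : 1 ≤ ‖v‖ := by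
  obtain ⟨a, ha, rfl⟩ := hv
  have ha₀ : a ≠ 0 := by rintro rfl; exact hv₀ (map_zero _)
  have htwo : (2 : ℝ) ≤ (a ⬝ᵥ a : ℤ) := by
    exact_mod_cast two_le_dotProduct_self_of_mem_checkerboard ha ha₀
  rw [← one_le_sq_iff₀ (norm_nonneg _), norm_sq_scaledIntVec]
  linarith

lemma exists_root_mem_rootLatticeD [Nontrivial ι] (hv : v ∈ rootLatticeD ι) (hv₀ : v ≠ 0) :
    ∃ u ∈ rootLatticeD ι, ‖u‖ = 1 ∧ 1 ≤ inner ℝ u v := by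
  obtain ⟨a, ha, rfl⟩ := hv
  have ha₀ : a ≠ 0 := by rintro rfl; exact hv₀ (map_zero _)
  obtain ⟨e, he, hee, hea⟩ := exists_root_mem_checkerboard ha ha₀
  have hea_real : (2 : ℝ) ≤ (e ⬝ᵥ a : ℤ) := by exact_mod_cast hea
  refine ⟨scaledIntVec ι e, ⟨e, he, rfl⟩, ?_, ?_⟩
  · rw [← pow_eq_one_iff_of_nonneg (norm_nonneg _) two_ne_zero, norm_sq_scaledIntVec, hee]
    norm_num
  · rw [inner_scaledIntVec]
    linarith

lemma Lfcc_eq_rootLatticeD : Lfcc = rootLatticeD (Fin 3) := by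
  ext x
  constructor
  · rintro ⟨m, rfl⟩
    refine ⟨![2 * m 0 + m 1, m 1 + m 2, m 2], ?_, ?_⟩
    · exact ⟨m 0 + m 1 + m 2, by simp [Fin.sum_univ_three]; ring⟩
    · ext i
      fin_cases i <;> simp [vfcc] <;> ring
  · rintro ⟨a, ⟨k, hk⟩, rfl⟩
    refine ⟨![k - a 1, a 1 - a 2, a 2], ?_⟩
    have ha : a 0 = 2 * k - a 1 - a 2 := by rw [Fin.sum_univ_three] at hk; lia
    ext i
    fin_cases i <;> simp [vfcc, ha] <;> ring

end rootLatticeD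

theorem fcc_voronoi_facets_general {ι : Type*} [Fintype ι] [Nontrivial ι] {d : ℕ}
    (hd : Fintype.card ι = d + 1) {x y : EuclideanSpace ℝ ι} (hx : x ∈ rootLatticeD ι)
    (hy : y ∈ rootLatticeD ι) (hxy : x ≠ y) :
    0 < μH[d] (voronoiCell (rootLatticeD ι : Set (EuclideanSpace ℝ ι)) x ∩
      voronoiCell (rootLatticeD ι : Set (EuclideanSpace ℝ ι)) y) ↔ dist x y = 1 := by
  have hdim : finrank ℝ (EuclideanSpace ℝ ι) = d + 1 := by rw [finrank_euclideanSpace, hd]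
  constructor
  · intro hpos
    by_contra hdist
    obtain ⟨u, hu, hunorm, huinner⟩ :=
      exists_root_mem_rootLatticeD (sub_mem hy hx) (sub_ne_zero.2 hxy.symm)
    refine hpos.ne' (hausdorffMeasure_voronoiCell_inter_eq_zero_of_norm_sq_le_inner hdim hx hy hxy
      hu (norm_ne_zero_iff.1 (hunorm ▸ one_ne_zero)) ?_ (by rwa [hunorm, one_pow]))
    rintro rfl
    exact hdist (by rw [dist_eq_norm', hunorm])
  · intro hdist
    exact hausdorffMeasure_voronoiCell_inter_pos_of_forall_dist_le_norm hdim hx hy hxy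
      fun v hv hv₀ ↦ hdist ▸ one_le_norm_of_mem_rootLatticeD hv hv₀

theorem fcc_voronoi_facets (x y : EuclideanSpace ℝ (Fin 3))
    (hx : x ∈ Lfcc) (hy : y ∈ Lfcc) (hxy : x ≠ y) :
    0 < μH[2] (vorFcc x ∩ vorFcc y) ↔ dist x y = 1 := by
  rw [Lfcc_eq_rootLatticeD] at hx hy
  simpa [vorFcc, voronoiCell, Lfcc_eq_rootLatticeD] using
    fcc_voronoi_facets_general (d := 2) (by simp) hx hy hxy

end
end
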